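/- Let N and d be positive integers, let S be a finite set of strings x : Fin N → Bool, let a : S → ℂ satisfy ∑_{x ∈ S} |a_x|² = 1, and for each x ∈ S let ψ_x ∈ ℂ^{(Fin 2 × Fin N) × Fin d} be a vector with ‖ψ_x‖ ≤ 1. For x ∈ S let M_x be the diagonal matrix over the index set (Fin 2 × Fin N) × Fin d whose diagonal entry at ((c, j), w) is 1 if c = 0 or x j = false, and 0 otherwise, and set ε_x = ‖ψ_x‖² − ‖M_x ψ_x‖². Let Γ be an S × S complex matrix, and for each i ∈ Fin N let Γ_i be the S × S matrix with (Γ_i)_{xy} = Γ_{xy} if x i ≠ y i and (Γ_i)_{xy} = 0 if x i = y i. Then |∑_{x,y ∈ S} Γ_{xy} · conj(a_x) · a_y · (⟨ψ_x, ψ_y⟩ − ⟨M_x ψ_x, M_y ψ_y⟩)| ≤ 2 · sqrt(∑_{x ∈ S} |a_x|² ε_x) · max_{i ∈ Fin N} ‖Γ_i‖ + (∑_{x ∈ S} |a_x|² ε_x) · ‖Γ‖, where ‖·‖ denotes the spectral norm of a matrix. -/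

import Mathlib

open scoped InnerProductSpace

/-!
Split each `φ x = a x • ψ x` into the part `κ x` that survives the query and the part `δ x` that
explodes. As `⟪φ x, φ y⟫ - ⟪κ x, κ y⟫ = ⟪δ x, δ y⟫ + ⟪δ x, κ y⟫ + ⟪κ x, δ y⟫`, the progress changes
by three bilinear forms. In the first one `Γ` acts on `δ` twice, which costs `‖Γ‖ * ∑ ‖δ x‖ ^ 2`. In
the mixed ones a basis state querying position `i` contributes to the pair `x`, `y` only if exactly
one of the two inputs has a bomb at `i`, so that `Γ` may be replaced by `Γ_i` there. Cauchy–Schwarz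
over the basis states then bounds each of them by `max ‖Γ_i‖ * √(∑ ‖δ x‖ ^ 2) * √(∑ ‖κ x‖ ^ 2)`.
-/

section BilinearForms

variable {𝕜 : Type*} [RCLike 𝕜] {X P : Type*} [Fintype P]

theorem inner_sub_inner_eq_add_add {E : Type*} [SeminormedAddCommGroup E] [InnerProductSpace 𝕜 E]
    (u v u' v' : E) :
    ⟪u, v⟫_𝕜 - ⟪u', v'⟫_𝕜 = ⟪u - u', v - v'⟫_𝕜 + ⟪u - u', v'⟫_𝕜 + ⟪u', v - v'⟫_𝕜 := by
  simp only [inner_sub_left, inner_sub_right]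
  ring

theorem mul_inner_eq_sum_of_eq_or_eq_zero {c : 𝕜} {b : P → 𝕜} {u v : EuclideanSpace 𝕜 P}
    (h : ∀ p, b p = c ∨ u p = 0 ∨ v p = 0) :
    c * ⟪u, v⟫_𝕜 = ∑ p, b p * (starRingEnd 𝕜 (u p) * v p) := by
  rw [PiLp.inner_apply, Finset.mul_sum]
  refine Finset.sum_congr rfl fun p _ => ?_
  rw [RCLike.inner_apply']
  rcases h p with hb | hu | hv
  · rw [hb]
  · simp [hu]
  · simp [hv]

variable [Fintype X]

/-- The `p`-th coordinates of a family of vectors, collected into a vector indexed by the family. -/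
def coordSlice (f : X → EuclideanSpace 𝕜 P) (p : P) : EuclideanSpace 𝕜 X :=
  WithLp.toLp 2 fun x => f x p

theorem sum_norm_sq_coordSlice (f : X → EuclideanSpace 𝕜 P) :
    ∑ p, ‖coordSlice f p‖ ^ 2 = ∑ x, ‖f x‖ ^ 2 := by
  simp only [EuclideanSpace.norm_sq_eq, coordSlice]
  exact Finset.sum_comm

variable [DecidableEq X]

theorem norm_sum_sum_mul_conj_mul_le (A : Matrix X X 𝕜) (u v : EuclideanSpace 𝕜 X) :
    ‖∑ x, ∑ y, A x y * (starRingEnd 𝕜 (u x) * v y)‖ ≤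
      ‖Matrix.toEuclideanCLM (𝕜 := 𝕜) A‖ * (‖u‖ * ‖v‖) := by
  have form_eq_inner : ∑ x, ∑ y, A x y * (starRingEnd 𝕜 (u x) * v y) =
      ⟪u, Matrix.toEuclideanCLM (𝕜 := 𝕜) A v⟫_𝕜 := by
    simp only [PiLp.inner_apply, RCLike.inner_apply', Matrix.ofLp_toEuclideanCLM, Matrix.mulVec,
      dotProduct, Finset.mul_sum, mul_left_comm]
  calc ‖∑ x, ∑ y, A x y * (starRingEnd 𝕜 (u x) * v y)‖
      ≤ ‖u‖ * ‖Matrix.toEuclideanCLM (𝕜 := 𝕜) A v‖ := form_eq_inner ▸ norm_inner_le_norm _ _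
    _ ≤ ‖u‖ * (‖Matrix.toEuclideanCLM (𝕜 := 𝕜) A‖ * ‖v‖) := by
        gcongr
        exact ContinuousLinearMap.le_opNorm _ _
    _ = ‖Matrix.toEuclideanCLM (𝕜 := 𝕜) A‖ * (‖u‖ * ‖v‖) := mul_left_comm _ _ _

theorem norm_sum_sum_mul_inner_le (Γ : Matrix X X 𝕜) (A : P → Matrix X X 𝕜)
    {f g : X → EuclideanSpace 𝕜 P} {C : ℝ} (hC : 0 ≤ C)
    (hA : ∀ p, ‖Matrix.toEuclideanCLM (𝕜 := 𝕜) (A p)‖ ≤ C)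
    (h : ∀ x y p, A p x y = Γ x y ∨ f x p = 0 ∨ g y p = 0) :
    ‖∑ x, ∑ y, Γ x y * ⟪f x, g y⟫_𝕜‖ ≤ C * (√(∑ x, ‖f x‖ ^ 2) * √(∑ x, ‖g x‖ ^ 2)) := by
  have sum_by_coord : ∑ x, ∑ y, Γ x y * ⟪f x, g y⟫_𝕜 =
      ∑ p, ∑ x, ∑ y, A p x y * (starRingEnd 𝕜 (coordSlice f p x) * coordSlice g p y) := by
    simp only [fun x y => mul_inner_eq_sum_of_eq_or_eq_zero (h x y), coordSlice]
    rw [Finset.sum_comm (s := (Finset.univ : Finset P))]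
    exact Finset.sum_congr rfl fun x _ => Finset.sum_comm
  calc ‖∑ x, ∑ y, Γ x y * ⟪f x, g y⟫_𝕜‖
      ≤ ∑ p, C * (‖coordSlice f p‖ * ‖coordSlice g p‖) := by
        rw [sum_by_coord]
        refine norm_sum_le_of_le _ fun p _ => (norm_sum_sum_mul_conj_mul_le _ _ _).trans ?_
        gcongr
        exact hA p
    _ = C * ∑ p, ‖coordSlice f p‖ * ‖coordSlice g p‖ := (Finset.mul_sum _ _ _).symm
    _ ≤ C * (√(∑ p, ‖coordSlice f p‖ ^ 2) * √(∑ p, ‖coordSlice g p‖ ^ 2)) := by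
        gcongr
        exact Real.sum_mul_le_sqrt_mul_sqrt _ _ _
    _ = C * (√(∑ x, ‖f x‖ ^ 2) * √(∑ x, ‖g x‖ ^ 2)) := by simp only [sum_norm_sq_coordSlice]

end BilinearForms

section AdversaryMatrix

variable {R X ι α : Type*} [Zero R] [DecidableEq α]

/-- The restriction `Γ_i` of an adversary matrix `Γ`, whose rows and columns are labelled by inputs
via `s`, to the pairs of inputs that differ at position `i`. -/
def differingAt (s : X → ι → α) (Γ : Matrix X X R) (i : ι) : Matrix X X R :=
  Matrix.of fun x y => if s x i ≠ s y i then Γ x y else 0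

theorem differingAt_apply_eq_or_eq (s : X → ι → α) (Γ : Matrix X X R) (i : ι) (x y : X) :
    differingAt s Γ i x y = Γ x y ∨ s x i = s y i := by
  by_cases h : s x i = s y i
  · exact .inr h
  · exact .inl (if_pos h)

theorem norm_differingAt_le_iSup {𝕜 : Type*} [RCLike 𝕜] [Fintype X] [DecidableEq X] [Finite ι]
    (s : X → ι → α) (Γ : Matrix X X 𝕜) (i : ι) :
    ‖Matrix.toEuclideanCLM (𝕜 := 𝕜) (differingAt s Γ i)‖ ≤
      ⨆ j, ‖Matrix.toEuclideanCLM (𝕜 := 𝕜) (differingAt s Γ j)‖ :=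
  le_ciSup (f := fun j => ‖Matrix.toEuclideanCLM (𝕜 := 𝕜) (differingAt s Γ j)‖)
    (Set.finite_range _).bddAbove i

end AdversaryMatrix

section BombQuery

variable {𝕜 : Type*} [RCLike 𝕜] {X P ι : Type*} [Fintype P] [DecidableEq P]

/-- The projection implementing one bomb query on input `s`: the basis state `p` makes no query if
`idle p`, and otherwise explodes iff `s` has a bomb (`true`) at position `pos p`. With a control bit
`c` and an index register `j`, `idle` is `c = 0` and `pos` reads `j`. -/
def bombQuery (idle : P → Prop) [DecidablePred idle] (pos : P → ι) (s : ι → Bool) :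
    EuclideanSpace 𝕜 P →ₗ[𝕜] EuclideanSpace 𝕜 P :=
  Matrix.toEuclideanLin (Matrix.diagonal fun p => if idle p ∨ s (pos p) = false then 1 else 0)

variable (idle : P → Prop) [DecidablePred idle] (pos : P → ι)

theorem bombQuery_apply (s : ι → Bool) (v : EuclideanSpace 𝕜 P) (p : P) :
    bombQuery idle pos s v p = if idle p ∨ s (pos p) = false then v p else 0 := by
  simp [bombQuery, Matrix.toLpLin_apply, Matrix.mulVec_diagonal]

theorem norm_sub_bombQuery_sq (s : ι → Bool) (v : EuclideanSpace 𝕜 P) :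
    ‖v - bombQuery idle pos s v‖ ^ 2 = ‖v‖ ^ 2 - ‖bombQuery idle pos s v‖ ^ 2 := by
  simp only [EuclideanSpace.norm_sq_eq, ← Finset.sum_sub_distrib, PiLp.sub_apply, bombQuery_apply]
  refine Finset.sum_congr rfl fun p _ => ?_
  split_ifs <;> simp

theorem norm_bombQuery_sq_le (s : ι → Bool) (v : EuclideanSpace 𝕜 P) :
    ‖bombQuery idle pos s v‖ ^ 2 ≤ ‖v‖ ^ 2 :=
  sub_nonneg.mp (norm_sub_bombQuery_sq idle pos s v ▸ sq_nonneg _)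

variable {idle pos} in
theorem bombQuery_apply_eq_zero_or_sub_bombQuery_apply_eq_zero {s t : ι → Bool} {p : P}
    (hst : s (pos p) = t (pos p)) (u v : EuclideanSpace 𝕜 P) :
    bombQuery idle pos s u p = 0 ∨ (v - bombQuery idle pos t v) p = 0 := by
  rw [PiLp.sub_apply, bombQuery_apply, bombQuery_apply, hst]
  split_ifs <;> simp

variable [Fintype X] [DecidableEq X] [Finite ι]

theorem norm_sum_sum_mul_inner_sub_inner_bombQuery_le (s : X → ι → Bool) (Γ : Matrix X X 𝕜)
    (φ : X → EuclideanSpace 𝕜 P) :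
    ‖∑ x, ∑ y, Γ x y *
        (⟪φ x, φ y⟫_𝕜 - ⟪bombQuery idle pos (s x) (φ x), bombQuery idle pos (s y) (φ y)⟫_𝕜)‖ ≤
      2 * √(∑ x, (‖φ x‖ ^ 2 - ‖bombQuery idle pos (s x) (φ x)‖ ^ 2)) * √(∑ x, ‖φ x‖ ^ 2) *
          (⨆ i, ‖Matrix.toEuclideanCLM (𝕜 := 𝕜) (differingAt s Γ i)‖) +
        (∑ x, (‖φ x‖ ^ 2 - ‖bombQuery idle pos (s x) (φ x)‖ ^ 2)) *
          ‖Matrix.toEuclideanCLM (𝕜 := 𝕜) Γ‖ := by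
  simp only [← norm_sub_bombQuery_sq]
  set κ : X → EuclideanSpace 𝕜 P := fun x => bombQuery idle pos (s x) (φ x)
  set δ : X → EuclideanSpace 𝕜 P := fun x => φ x - κ x
  set G : ℝ := ⨆ i, ‖Matrix.toEuclideanCLM (𝕜 := 𝕜) (differingAt s Γ i)‖
  have G_nonneg : 0 ≤ G := Real.iSup_nonneg fun _ => norm_nonneg _
  have surviving_le : √(∑ x, ‖κ x‖ ^ 2) ≤ √(∑ x, ‖φ x‖ ^ 2) :=
    Real.sqrt_le_sqrt (Finset.sum_le_sum fun x _ => norm_bombQuery_sq_le idle pos (s x) (φ x))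
  have exploded_exploded := norm_sum_sum_mul_inner_le Γ (fun _ => Γ) (f := δ) (g := δ)
    (norm_nonneg _) (fun _ => le_rfl) fun _ _ _ => .inl rfl
  have exploded_surviving := norm_sum_sum_mul_inner_le Γ (fun p => differingAt s Γ (pos p))
    (f := δ) (g := κ) G_nonneg (fun p => norm_differingAt_le_iSup s Γ (pos p)) fun x y p =>
      (differingAt_apply_eq_or_eq s Γ (pos p) x y).imp_right fun h =>
        (bombQuery_apply_eq_zero_or_sub_bombQuery_apply_eq_zero h.symm (φ y) (φ x)).symm
  have surviving_exploded := norm_sum_sum_mul_inner_le Γ (fun p => differingAt s Γ (pos p))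
    (f := κ) (g := δ) G_nonneg (fun p => norm_differingAt_le_iSup s Γ (pos p)) fun x y p =>
      (differingAt_apply_eq_or_eq s Γ (pos p) x y).imp_right fun h =>
        bombQuery_apply_eq_zero_or_sub_bombQuery_apply_eq_zero h (φ x) (φ y)
  calc ‖∑ x, ∑ y, Γ x y * (⟪φ x, φ y⟫_𝕜 - ⟪κ x, κ y⟫_𝕜)‖
      = ‖(∑ x, ∑ y, Γ x y * ⟪δ x, δ y⟫_𝕜) + (∑ x, ∑ y, Γ x y * ⟪δ x, κ y⟫_𝕜) +
          ∑ x, ∑ y, Γ x y * ⟪κ x, δ y⟫_𝕜‖ := by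
        simp only [inner_sub_inner_eq_add_add (φ _) (φ _) (κ _) (κ _), mul_add,
          Finset.sum_add_distrib, δ]
    _ ≤ ‖Matrix.toEuclideanCLM (𝕜 := 𝕜) Γ‖ * (√(∑ x, ‖δ x‖ ^ 2) * √(∑ x, ‖δ x‖ ^ 2)) +
          G * (√(∑ x, ‖δ x‖ ^ 2) * √(∑ x, ‖κ x‖ ^ 2)) +
          G * (√(∑ x, ‖κ x‖ ^ 2) * √(∑ x, ‖δ x‖ ^ 2)) :=
        norm_add₃_le.trans
          (add_le_add_three exploded_exploded exploded_surviving surviving_exploded)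
    _ ≤ ‖Matrix.toEuclideanCLM (𝕜 := 𝕜) Γ‖ * (√(∑ x, ‖δ x‖ ^ 2) * √(∑ x, ‖δ x‖ ^ 2)) +
          G * (√(∑ x, ‖δ x‖ ^ 2) * √(∑ x, ‖φ x‖ ^ 2)) +
          G * (√(∑ x, ‖φ x‖ ^ 2) * √(∑ x, ‖δ x‖ ^ 2)) := by gcongr
    _ = 2 * √(∑ x, ‖δ x‖ ^ 2) * √(∑ x, ‖φ x‖ ^ 2) * G +
          (∑ x, ‖δ x‖ ^ 2) * ‖Matrix.toEuclideanCLM (𝕜 := 𝕜) Γ‖ := by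
        rw [Real.mul_self_sqrt (Finset.sum_nonneg fun _ _ => sq_nonneg _)]
        ring

theorem adversary_progress_step_general (s : X → ι → Bool) (a : X → 𝕜)
    (ψ : X → EuclideanSpace 𝕜 P) (hψ : ∑ x, ‖a x‖ ^ 2 * ‖ψ x‖ ^ 2 ≤ 1) (Γ : Matrix X X 𝕜) :
    ‖∑ x, ∑ y, Γ x y * starRingEnd 𝕜 (a x) * a y *
        (⟪ψ x, ψ y⟫_𝕜 - ⟪bombQuery idle pos (s x) (ψ x), bombQuery idle pos (s y) (ψ y)⟫_𝕜)‖ ≤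
      2 * √(∑ x, ‖a x‖ ^ 2 * (‖ψ x‖ ^ 2 - ‖bombQuery idle pos (s x) (ψ x)‖ ^ 2)) *
          (⨆ i, ‖Matrix.toEuclideanCLM (𝕜 := 𝕜) (differingAt s Γ i)‖) +
        (∑ x, ‖a x‖ ^ 2 * (‖ψ x‖ ^ 2 - ‖bombQuery idle pos (s x) (ψ x)‖ ^ 2)) *
          ‖Matrix.toEuclideanCLM (𝕜 := 𝕜) Γ‖ := by
  have weighted_bound :=
    norm_sum_sum_mul_inner_sub_inner_bombQuery_le idle pos s Γ fun x => a x • ψ x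
  have weighted_form (x y : X) (u v u' v' : EuclideanSpace 𝕜 P) :
      Γ x y * (⟪a x • u, a y • v⟫_𝕜 - ⟪a x • u', a y • v'⟫_𝕜) =
        Γ x y * starRingEnd 𝕜 (a x) * a y * (⟪u, v⟫_𝕜 - ⟪u', v'⟫_𝕜) := by
    simp only [inner_smul_left, inner_smul_right]
    ring
  simp only [map_smul, weighted_form, norm_smul, mul_pow, ← mul_sub] at weighted_bound
  refine weighted_bound.trans ?_
  gcongr ?_ * _ + _
  · exact Real.iSup_nonneg fun _ => norm_nonneg _
  · exact mul_le_of_le_one_right (by positivity) (Real.sqrt_le_one.mpr hψ)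

end BombQuery

theorem sum_norm_sq_mul_norm_sq_le_one {X E F : Type*} [SeminormedAddGroup E]
    [SeminormedAddGroup F] {S : Finset X} {a : X → E} {ψ : X → F} (ha : ∑ x ∈ S, ‖a x‖ ^ 2 ≤ 1)
    (hψ : ∀ x ∈ S, ‖ψ x‖ ≤ 1) : ∑ x : S, ‖a x‖ ^ 2 * ‖ψ x‖ ^ 2 ≤ 1 := by
  refine le_trans ?_ ha
  rw [← Finset.sum_coe_sort S]
  exact Finset.sum_le_sum fun x _ =>
    mul_le_of_le_one_right (sq_nonneg _) (pow_le_one₀ (norm_nonneg _) (hψ x x.2))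

/-- Bound on the change of the adversary progress function caused by a single bomb
query: `|∑_{x,y∈S} Γ_{xy} a_x* a_y (⟨ψ_x, ψ_y⟩ - ⟨M_x ψ_x, M_y ψ_y⟩)|
  ≤ 2 √(∑_x |a_x|² ε_x) max_i ‖Γ_i‖ + (∑_x |a_x|² ε_x) ‖Γ‖`. -/
theorem adversary_progress_step (N d : ℕ) (hN : 0 < N) (hd : 0 < d)
    (S : Finset (Fin N → Bool))
    (a : (Fin N → Bool) → ℂ) (ha : ∑ x ∈ S, ‖a x‖ ^ 2 = 1)
    (ψ : (Fin N → Bool) → EuclideanSpace ℂ ((Fin 2 × Fin N) × Fin d))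
    (hψ : ∀ x ∈ S, ‖ψ x‖ ≤ 1)
    (Γ : Matrix ↥S ↥S ℂ) :
    let M : (Fin N → Bool) →
        Matrix ((Fin 2 × Fin N) × Fin d) ((Fin 2 × Fin N) × Fin d) ℂ :=
      fun x => Matrix.diagonal fun p => if p.1.1 = 0 ∨ x p.1.2 = false then 1 else 0
    let Mψ : (Fin N → Bool) → EuclideanSpace ℂ ((Fin 2 × Fin N) × Fin d) :=
      fun x => Matrix.toEuclideanLin (M x) (ψ x)
    let ε : (Fin N → Bool) → ℝ := fun x => ‖ψ x‖ ^ 2 - ‖Mψ x‖ ^ 2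
    let Γi : Fin N → Matrix ↥S ↥S ℂ := fun i =>
      Matrix.of fun x y =>
        if (x : Fin N → Bool) i ≠ (y : Fin N → Bool) i then Γ x y else 0
    ‖∑ x : ↥S, ∑ y : ↥S, Γ x y * (starRingEnd ℂ) (a x) * a y *
        (⟪ψ x, ψ y⟫_ℂ - ⟪Mψ x, Mψ y⟫_ℂ)‖ ≤
      2 * Real.sqrt (∑ x : ↥S, ‖a x‖ ^ 2 * ε x) *
          (⨆ i : Fin N, ‖Matrix.toEuclideanCLM (𝕜 := ℂ) (Γi i)‖) +
        (∑ x : ↥S, ‖a x‖ ^ 2 * ε x) * ‖Matrix.toEuclideanCLM (𝕜 := ℂ) Γ‖ := by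
  exact adversary_progress_step_general (X := ↥S) (P := (Fin 2 × Fin N) × Fin d)
    (fun p => p.1.1 = 0) (fun p => p.1.2) Subtype.val (fun x => a x) (fun x => ψ x)
    (sum_norm_sq_mul_norm_sq_le_one ha.le hψ) Γ
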